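/- Let a and b be elements of a semigroup S satisfying a = aba and b = bab. Then the map x ↦ xb is a semigroup isomorphism from (aSa, ·) onto (aSb, ⋆_{aab}), where · is the operation of S restricted to aSa and ⋆_{aab} is the sandwich operation x ⋆_{aab} y = x(aab)y restricted to aSb. -/

import Mathlib

/-! Since `a = aba`, the element `ba` is a right identity and `ab` a left identity on `aSa`.
So right multiplication by `a` undoes `x ↦ xb` on `aSa`, and
`(xb)(aab)(yb) = (xba)(aby)b = xyb`. Surjectivity comes from `b = bab`:
`aub = (a(ub)a)b`. -/

/-- If `a = aba` and `b = bab` in a semigroup `S`, then `x ↦ xb`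
is a semigroup isomorphism from `(aSa, ·)` onto `(aSb, ⋆_{aab})`, where
`x ⋆_{aab} y = x (aab) y`: it is a bijection of `aSa` onto `aSb` and a homomorphism. -/
theorem stmt_11 {S : Type*} [Semigroup S] (a b : S)
    (ha : a = a * b * a) (hb : b = b * a * b) :
    Set.BijOn (· * b) {x : S | ∃ u, x = a * u * a} {x : S | ∃ u, x = a * u * b} ∧
    ∀ x ∈ {x : S | ∃ u, x = a * u * a}, ∀ y ∈ {x : S | ∃ u, x = a * u * a},
      (x * y) * b = (x * b) * (a * a * b) * (y * b) := by
  have hr : ∀ x ∈ {x : S | ∃ u, x = a * u * a}, x * b * a = x := by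
    rintro x ⟨u, rfl⟩
    calc a * u * a * b * a = a * u * (a * b * a) := by simp only [mul_assoc]
      _ = a * u * a := by rw [← ha]
  have hl : ∀ x ∈ {x : S | ∃ u, x = a * u * a}, a * b * x = x := by
    rintro x ⟨u, rfl⟩
    calc a * b * (a * u * a) = (a * b * a) * u * a := by simp only [mul_assoc]
      _ = a * u * a := by rw [← ha]
  refine ⟨⟨?_, ?_, ?_⟩, ?_⟩
  · rintro x ⟨u, rfl⟩
    exact ⟨u * a, by simp only [mul_assoc]⟩
  · intro x hx y hy hxy
    have h : x * b = y * b := hxy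
    rw [← hr x hx, h, hr y hy]
  · rintro x ⟨u, rfl⟩
    refine ⟨a * (u * b) * a, ⟨u * b, rfl⟩, ?_⟩
    calc a * (u * b) * a * b = a * u * (b * a * b) := by simp only [mul_assoc]
      _ = a * u * b := by rw [← hb]
  · intro x hx y hy
    calc x * y * b = (x * b * a) * (a * b * y) * b := by rw [hr x hx, hl y hy]
      _ = (x * b) * (a * a * b) * (y * b) := by simp only [mul_assoc]
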